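/- Let Γ be an n-rose labeled graph with all labels positive such that either (a) exactly one pair {e, ē} of edges of Γ is mobile, or (b) n ≤ 3. Then the following are equivalent: (i) some reduced labeled graph obtained from Γ by a finite sequence of slide, induction and A^{±1}-moves, with all intermediate labeled graphs reduced, contains a strict ascending loop, i.e. a loop e with λ(e) = 1 ≠ λ(ē); (ii) Γ contains a strict monotone cycle. -/

import Mathlib

/-! Labeled graphs in the sense of generalized Baumslag–Solitar theory. -/

structure LGraph (V E : Type) where
  o : E → V
  bar : E → E
  bar_bar : ∀ e, bar (bar e) = e
  bar_ne : ∀ e, bar e ≠ e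
  lab : E → ℤ

namespace LGraph

variable {V E V' E' : Type}

/-- Terminal vertex of an oriented edge. -/
def t (G : LGraph V E) (e : E) : V := G.o (G.bar e)

/-- All labels are positive. -/
def Positive (G : LGraph V E) : Prop := ∀ e : E, 0 < G.lab e

/-- No collapsible edge: every label-1 edge is a loop. -/
def Reduced (G : LGraph V E) : Prop := ∀ e : E, G.lab e = 1 → G.o e = G.t e

/-- An `n`-rose: one vertex and `n` pairs of oriented edges. -/
def IsRose (G : LGraph V E) (n : ℕ) : Prop :=
  Nat.card V = 1 ∧ Nat.card E = 2 * n

/-- Modulus of a single oriented edge: `λ(ē)/λ(e)`. -/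
def qe (G : LGraph V E) (e : E) : ℚ := (G.lab (G.bar e) : ℚ) / (G.lab e : ℚ)

/-- Modulus of an edge path. -/
def q (G : LGraph V E) (l : List E) : ℚ := (l.map G.qe).prod

/-- Consecutive edges match up. -/
def IsEdgePath (G : LGraph V E) (l : List E) : Prop :=
  List.Chain' (fun a b => G.t a = G.o b) l

/-- An `e`-edge path. -/
def IsEEdgePath (G : LGraph V E) (e : E) (l : List E) : Prop :=
  G.IsEdgePath l ∧
  (∀ a ∈ l, a ≠ e ∧ a ≠ G.bar e) ∧
  (∀ a ∈ l.head?, G.o a = G.o e) ∧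
  ∀ i : Fin l.length, ∃ k : ℤ,
    (G.lab e : ℚ) * G.q (l.take i.1) = (k : ℚ) * (G.lab (l.get i) : ℚ)

/-- A monotone cycle `(e₁,…,eₛ,e)`. -/
def IsMonotoneCycle (G : LGraph V E) (l : List E) (e : E) : Prop :=
  G.IsEEdgePath (G.bar e) l ∧
  G.t (l.getLastD e) = G.o e ∧
  ∃ k : ℤ, G.q (l ++ [e]) = (k : ℚ)

/-- A strict monotone cycle. -/
def IsStrictMonotoneCycle (G : LGraph V E) (l : List E) (e : E) : Prop :=
  G.IsMonotoneCycle l e ∧ G.q (l ++ [e]) ≠ 1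

def HasStrictMonotoneCycle (G : LGraph V E) : Prop :=
  ∃ (l : List E) (e : E), G.IsStrictMonotoneCycle l e

/-- A strict `e`-integer cycle. -/
def IsStrictIntegerCycle (G : LGraph V E) (e : E) (l : List E) : Prop :=
  G.IsEEdgePath e l ∧ l ≠ [] ∧
  G.t (l.getLastD e) = G.o (l.headD e) ∧
  (∃ k : ℤ, G.q l = (k : ℚ)) ∧ G.q l ≠ 1

/-- A mobile edge. -/
def Mobile (G : LGraph V E) (e : E) : Prop :=
  (∃ l, G.IsStrictMonotoneCycle l e ∨ G.IsStrictMonotoneCycle l (G.bar e)) ∨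
  (∃ l, G.IsStrictIntegerCycle e l ∨ G.IsStrictIntegerCycle (G.bar e) l)

/-- The single slide of `e` over `f` is permitted. -/
def CanSlide (G : LGraph V E) (e f : E) : Prop :=
  f ≠ e ∧ f ≠ G.bar e ∧ G.o f = G.o e ∧ G.lab f ∣ G.lab e

open Classical in
/-- The result of the single slide of `e` over `f`. -/
noncomputable def slide (G : LGraph V E) (e f : E) : LGraph V E where
  o := fun x => if x = e then G.t f else G.o x
  bar := G.bar
  bar_bar := G.bar_bar
  bar_ne := G.bar_ne
  lab := fun x => if x = e then G.lab e * G.lab (G.bar f) / G.lab f else G.lab x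

/-- Successively slide `e` over the edges of a path. -/
noncomputable def slidePath : LGraph V E → E → List E → LGraph V E
  | G, _, [] => G
  | G, e, f :: l => slidePath (G.slide e f) e l

/-- Each single slide in the successive slide of `e` over a path is permitted. -/
def CanSlidePath : LGraph V E → E → List E → Prop
  | _, _, [] => True
  | G, e, f :: l => G.CanSlide e f ∧ CanSlidePath (G.slide e f) e l

/-- Each single slide is permitted and each intermediate graph is reduced. -/
def GoodSlidePath : LGraph V E → E → List E → Prop
  | _, _, [] => True
  | G, e, f :: l => G.CanSlide e f ∧ (G.slide e f).Reduced ∧ GoodSlidePath (G.slide e f) e l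

/-- Perform a finite sequence of single slides, given as pairs (slid edge, edge slid over). -/
noncomputable def slideSeq : LGraph V E → List (E × E) → LGraph V E
  | G, [] => G
  | G, p :: rest => slideSeq (G.slide p.1 p.2) rest

/-- A sequence of permitted single slides, each sliding a mobile edge. -/
def MobileSlideSeq : LGraph V E → List (E × E) → Prop
  | _, [] => True
  | G, p :: rest => G.Mobile p.1 ∧ G.CanSlide p.1 p.2 ∧ MobileSlideSeq (G.slide p.1 p.2) rest

/-- Isomorphism of labeled graphs. -/
def Isom (G : LGraph V E) (G' : LGraph V' E') : Prop :=
  ∃ (φ : V → V') (Φ : E → E'),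
    Function.Bijective φ ∧ Function.Bijective Φ ∧
    (∀ x, G'.o (Φ x) = φ (G.o x)) ∧
    (∀ x, G'.bar (Φ x) = Φ (G.bar x)) ∧
    (∀ x, G'.lab (Φ x) = G.lab x)

open Classical in
/-- The result of the induction move at the loop `e` with multiplier `m`. -/
noncomputable def inductionMove (G : LGraph V E) (e : E) (m : ℤ) : LGraph V E where
  o := G.o
  bar := G.bar
  bar_bar := G.bar_bar
  bar_ne := G.bar_ne
  lab := fun x => if x ≠ e ∧ x ≠ G.bar e ∧ G.o x = G.o e then m * G.lab x else G.lab x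

/-- `G'` is obtained from `G` by a single slide move (up to isomorphism). -/
def IsSlideMove (G : LGraph V E) (G' : LGraph V' E') : Prop :=
  ∃ e f, G.CanSlide e f ∧ Isom G' (G.slide e f)

/-- `G'` is obtained from `G` by a (forward) induction move. -/
def IsInductionMove (G : LGraph V E) (G' : LGraph V' E') : Prop :=
  ∃ (e : E) (m : ℤ), G.o e = G.t e ∧ G.lab e = 1 ∧ 1 ≤ m ∧ m ∣ G.lab (G.bar e) ∧
    Isom G' (G.inductionMove e m)

/-- `G'` is obtained from `G` by an A-move. -/
def IsAMove (G : LGraph V E) (G' : LGraph V' E') : Prop :=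
  ∃ (e d : E) (e' : E') (φ : V → V') (Φ : E → E'),
    G.o e = G.t e ∧ G.lab e = 1 ∧ G.lab (G.bar e) ≠ 1 ∧
    G.o d = G.o e ∧ G.t d ≠ G.o e ∧
    G.lab d ≠ 1 ∧ G.lab (G.bar d) ≠ 1 ∧ G.lab d ∣ G.lab (G.bar e) ∧
    (∀ x : E, G.o x = G.o e → x = e ∨ x = G.bar e ∨ x = d) ∧
    G'.o e' = φ (G.t d) ∧ G'.t e' = φ (G.t d) ∧
    G'.lab e' = G.lab (G.bar d) ∧
    G'.lab (G'.bar e') = G.lab (G.bar d) * G.lab (G.bar e) ∧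
    (∀ w₁ w₂ : V, w₁ ≠ G.o e → w₂ ≠ G.o e → φ w₁ = φ w₂ → w₁ = w₂) ∧
    (∀ v' : V', ∃ w : V, w ≠ G.o e ∧ φ w = v') ∧
    (∀ x : E, x ≠ e → x ≠ G.bar e → x ≠ d → x ≠ G.bar d →
      Φ x ≠ e' ∧ Φ x ≠ G'.bar e' ∧
      G'.o (Φ x) = φ (G.o x) ∧ G'.bar (Φ x) = Φ (G.bar x) ∧ G'.lab (Φ x) = G.lab x) ∧
    (∀ x y : E, x ≠ e → x ≠ G.bar e → x ≠ d → x ≠ G.bar d →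
      y ≠ e → y ≠ G.bar e → y ≠ d → y ≠ G.bar d → Φ x = Φ y → x = y) ∧
    (∀ y : E', y ≠ e' → y ≠ G'.bar e' →
      ∃ x : E, x ≠ e ∧ x ≠ G.bar e ∧ x ≠ d ∧ x ≠ G.bar d ∧ Φ x = y)

/-- A strict ascending loop: a loop with `λ(e) = 1 ≠ λ(ē)`. -/
def HasStrictAscendingLoop (G : LGraph V E) : Prop :=
  ∃ e : E, G.o e = G.t e ∧ G.lab e = 1 ∧ G.lab (G.bar e) ≠ 1

end LGraph

/-- A labeled graph with its vertex and edge types bundled. -/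
structure BGraph where
  V : Type
  E : Type
  G : LGraph V E

/-- An elementary deformation move: a slide, an induction move or its inverse,
or an A-move or its inverse. -/
def BGraph.ElemMove (X Y : BGraph) : Prop :=
  LGraph.IsSlideMove X.G Y.G ∨ LGraph.IsInductionMove X.G Y.G ∨
  LGraph.IsInductionMove Y.G X.G ∨ LGraph.IsAMove X.G Y.G ∨ LGraph.IsAMove Y.G X.G

/-- A finite sequence of elementary moves with all intermediate graphs reduced. -/
def BGraph.MoveSeq : BGraph → BGraph → Prop :=
  Relation.ReflTransGen (fun X Y => X.ElemMove Y ∧ Y.G.Reduced)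

/-- A reduced labeled graph is non-ascending if no reduced labeled graph obtained from it
by slide, induction and A-moves (all intermediate graphs reduced) contains a
strict ascending loop. -/
def LGraph.NonAscending {V E : Type} (G : LGraph V E) : Prop :=
  ∀ Y : BGraph, BGraph.MoveSeq ⟨V, E, G⟩ Y → ¬ Y.G.HasStrictAscendingLoop

/-! ### Multiplicative reachability -/

section Core

/-- One multiplicative rewriting step along an edge in `S`. -/
def Stp {E : Type} (bar : E → E) (L : E → ℕ) (S : E → Prop) (x y : ℕ) : Prop :=
  ∃ f, S f ∧ ∃ c, x = c * L f ∧ y = c * L (bar f)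

def Cn {E : Type} (bar : E → E) (L : E → ℕ) (S : E → Prop) : ℕ → ℕ → Prop :=
  Relation.ReflTransGen (Stp bar L S)

def Sx {E : Type} (bar : E → E) (e a : E) : Prop := a ≠ e ∧ a ≠ bar e

def NoSMC {E : Type} (bar : E → E) (L : E → ℕ) : Prop :=
  ∀ e k, Cn bar L (Sx bar e) (L (bar e)) (k * L e) → k = 1

def Mb {E : Type} (bar : E → E) (L : E → ℕ) (e : E) : Prop :=
  ∃ k, k ≠ 1 ∧ (Cn bar L (Sx bar e) (L e) (k * L e) ∨
    Cn bar L (Sx bar e) (L (bar e)) (k * L (bar e)))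

variable {E : Type} {bar : E → E} {L L' : E → ℕ} {S T : E → Prop}

theorem Cn.scale {x y : ℕ} (h : Cn bar L S x y) (k : ℕ) : Cn bar L S (k * x) (k * y) := by
  induction h with
  | refl => exact .refl
  | tail _ h2 ih =>
    obtain ⟨f, hf, c, rfl, rfl⟩ := h2
    exact ih.tail ⟨f, hf, k * c, by ring, by ring⟩

theorem Cn.symm' (hb : ∀ e, bar (bar e) = e) (hS : ∀ e, S e → S (bar e)) {x y : ℕ}
    (h : Cn bar L S x y) : Cn bar L S y x := by
  induction h with
  | refl => exact .refl
  | tail _ h2 ih =>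
    obtain ⟨f, hf, c, rfl, rfl⟩ := h2
    exact Relation.ReflTransGen.head ⟨bar f, hS f hf, c, rfl, by rw [hb]⟩ ih

/-- Simulation of steps. -/
theorem Cn.sim (h : ∀ f, S f → Cn bar L' T (L f) (L (bar f))) {x y : ℕ}
    (hxy : Cn bar L S x y) : Cn bar L' T x y := by
  induction hxy with
  | refl => exact .refl
  | tail _ h2 ih =>
    obtain ⟨f, hf, c, rfl, rfl⟩ := h2
    exact ih.trans ((h f hf).scale c)

theorem Cn.edge {f : E} (h : S f) : Cn bar L S (L f) (L (bar f)) :=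
  .single ⟨f, h, 1, by ring, by ring⟩

/-- The arithmetic heart. `Ri`, `Rj` play the role of the congruences omitting the slid edge
and the edge slid over; `R` omits both; `R'` is the new congruence. -/
theorem heart (R Ri Rj : ℕ → ℕ → Prop) (a b c d : ℕ)
    (Rs : ∀ x y k, R x y → R (k * x) (k * y))
    (Rrefl : ∀ x, R x x)
    (Rtrans : ∀ x y z, R x y → R y z → R x z)
    (hRi : ∀ x y, R x y → Ri x y) (hRj : ∀ x y, R x y → Rj x y)
    (hiab : ∀ k, Ri (k * a) (k * b)) (hiba : ∀ k, Ri (k * b) (k * a))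
    (Ritrans : ∀ x y z, Ri x y → Ri y z → Ri x z)
    (H1 : ∀ k, Rj a (k * b) → k = 1) (H2 : ∀ k, Rj b (k * a) → k = 1)
    (H3 : ∀ k, Ri (c * a) (k * d) → k = 1) (H4 : ∀ k, Ri d (k * (c * a)) → k = 1)
    (Na : ∀ k, R a (k * a) → k = 1) (Nb : ∀ k, R b (k * b) → k = 1)
    (Nd : c = 1 → ∀ k, R d (k * d) → k = 1)
    (St : ℕ → ℕ → Prop)
    (hSt : ∀ x y, St x y → R x y ∨ (∃ m, x = m * (c * b) ∧ y = m * d) ∨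
      (∃ m, x = m * d ∧ y = m * (c * b)))
    (x y k : ℕ) (hx : x = a ∨ x = b) (hy : y = a ∨ y = b)
    (h : Relation.ReflTransGen St x (k * y)) : k = 1 := by
  have key : ∀ z, Relation.ReflTransGen St x z → R a z ∨ R b z ∨ (c = 1 ∧ R d z) := by
    intro z hz
    induction hz with
    | refl => rcases hx with rfl | rfl <;> simp [Rrefl]
    | @tail z w _ hzw ih =>
      rcases hSt _ _ hzw with hR | ⟨m, rfl, rfl⟩ | ⟨m, rfl, rfl⟩
      · rcases ih with ih | ih | ⟨hc, ih⟩
        · exact .inl (Rtrans _ _ _ ih hR)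
        · exact .inr (.inl (Rtrans _ _ _ ih hR))
        · exact .inr (.inr ⟨hc, Rtrans _ _ _ ih hR⟩)
      · have hmc : m * c = 1 := by
          rcases ih with ih | ih | ⟨hc, ih⟩
          · exact H1 _ (hRj _ _ (by rwa [mul_assoc]))
          · exact Nb _ (by rwa [mul_assoc])
          · subst hc
            have := Ritrans _ _ _ (hRi _ _ ih) (by simpa using hiba m)
            simpa using H4 m (by simpa using this)
        have hm := Nat.eq_one_of_mul_eq_one_right hmc
        have hc := Nat.eq_one_of_mul_eq_one_left hmc
        subst hm hc
        exact .inr (.inr ⟨rfl, by simpa using Rrefl d⟩)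
      · have hmc : c * m = 1 := by
          rcases ih with ih | ih | ⟨hc, ih⟩
          · exact H3 _ (hRi _ _ (by simpa [mul_assoc] using Rs _ _ c ih))
          · exact H3 _ (Ritrans _ _ _ (hiab c)
              (hRi _ _ (by simpa [mul_assoc] using Rs _ _ c ih)))
          · rw [hc, Nd hc m ih]
        have hm := Nat.eq_one_of_mul_eq_one_left hmc
        have hc := Nat.eq_one_of_mul_eq_one_right hmc
        subst hm hc
        exact .inr (.inl (by simpa using Rrefl b))
  rcases key _ h with h | h | ⟨hc, h⟩ <;> rcases hy with rfl | rfl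
  · exact Na _ h
  · exact H1 _ (hRj _ _ h)
  · exact H2 _ (hRj _ _ h)
  · exact Nb _ h
  · subst hc
    exact H4 k (by simpa using hRi _ _ h)
  · subst hc
    exact H4 k (by simpa using Ritrans _ _ _ (hRi _ _ h) (hiba k))

/-- With a single generator, an integral multiple can only be reached if it is trivial. -/
theorem single_gen (u v : ℕ) (hu : 0 < u) (hv : 0 < v)
    (h1 : ∀ k, v = k * u → k = 1) (h2 : ∀ k, u = k * v → k = 1)
    (St : ℕ → ℕ → Prop)
    (hSt : ∀ x y, St x y → (∃ m, x = m * u ∧ y = m * v) ∨ (∃ m, x = m * v ∧ y = m * u))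
    (x k : ℕ) (hx : 0 < x) (h : Relation.ReflTransGen St x (k * x)) : k = 1 := by
  have key : ∀ z, Relation.ReflTransGen St x z →
      ∃ p q, z * u ^ p * v ^ q = x * v ^ p * u ^ q := by
    intro z hz
    induction hz with
    | refl => exact ⟨0, 0, rfl⟩
    | tail _ hzw ih =>
      obtain ⟨p, q, ih⟩ := ih
      rcases hSt _ _ hzw with ⟨m, rfl, rfl⟩ | ⟨m, rfl, rfl⟩
      · refine ⟨p + 1, q, ?_⟩
        calc _ = (m * u * u ^ p * v ^ q) * v := by ring
          _ = _ := by rw [ih]; ring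
      · refine ⟨p, q + 1, ?_⟩
        calc _ = (m * v * u ^ p * v ^ q) * u := by ring
          _ = _ := by rw [ih]; ring
  obtain ⟨p, q, hpq⟩ := key _ h
  have hpq : k * (u ^ p * v ^ q) = v ^ p * u ^ q := by
    apply Nat.eq_of_mul_eq_mul_left hx
    calc _ = k * x * u ^ p * v ^ q := by ring
      _ = _ := by rw [hpq]; ring
  have fin : ∀ (s t r : ℕ), 0 < s → 0 < t → (∀ k, t = k * s → k = 1) →
      k * s ^ r = t ^ r → k = 1 := by
    intro s t r hs ht hk h
    rcases Nat.eq_zero_or_pos r with rfl | hr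
    · simpa using h
    · have : s ∣ t := (Nat.pow_dvd_pow_iff hr.ne').1 ⟨k, by rw [← h]; ring⟩
      obtain ⟨j, rfl⟩ := this
      have := hk j (by ring)
      subst this
      rw [mul_one] at h
      exact Nat.eq_of_mul_eq_mul_right (pow_pos hs r) (by rw [h, one_mul])
  rcases le_total q p with hle | hle <;> obtain ⟨r, rfl⟩ := Nat.exists_eq_add_of_le hle
  · refine fin u v r hu hv h1 ?_
    apply Nat.eq_of_mul_eq_mul_left (Nat.mul_pos (pow_pos hu q) (pow_pos hv q))
    calc _ = k * (u ^ (q + r) * v ^ q) := by ring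
      _ = _ := by rw [hpq]; ring
  · refine fin v u r hv hu h2 ?_
    apply Nat.eq_of_mul_eq_mul_left (Nat.mul_pos (pow_pos hu p) (pow_pos hv p))
    calc _ = k * (u ^ p * v ^ (p + r)) := by ring
      _ = _ := by rw [hpq]; ring

/-- The data describing a slide of `i` over `j`. -/
structure Sld (bar : E → E) (L L' : E → ℕ) (i j : E) (c : ℕ) : Prop where
  ne1 : j ≠ i
  ne2 : j ≠ bar i
  old : L i = c * L j
  new : L' i = c * L (bar j)
  same : ∀ x, x ≠ i → L' x = L x

theorem Sx_bar (hb : ∀ e, bar (bar e) = e) (e : E) : Sx bar (bar e) = Sx bar e := by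
  funext a
  simp only [Sx, hb]
  exact propext and_comm

theorem Sx_symm (hb : ∀ e, bar (bar e) = e) (e a : E) (h : Sx bar e a) : Sx bar e (bar a) := by
  refine ⟨fun h' => h.2 (by rw [← h', hb]), fun h' => h.1 ?_⟩
  rw [← hb a, h', hb]

theorem Mb_bar (hb : ∀ e, bar (bar e) = e) (e : E) : Mb bar L (bar e) ↔ Mb bar L e := by
  simp only [Mb, Sx_bar hb, hb]
  constructor <;> rintro ⟨k, hk, h⟩ <;> exact ⟨k, hk, h.symm⟩

variable {i j : E} {c : ℕ}

/-- Congruences omitting an edge other than `j` do not grow. -/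
theorem Sld.cn_other (hb : ∀ e, bar (bar e) = e) (hn : ∀ e, bar e ≠ e)
    (s : Sld bar L L' i j c)
    (l : E) (h1 : l ≠ j) (h2 : l ≠ bar j) {x y : ℕ}
    (h : Cn bar L' (Sx bar l) x y) : Cn bar L (Sx bar l) x y := by
  have hbi : bar i ≠ i := hn i
  have hjb : bar j ≠ i := fun h => s.ne2 (by rw [← h, hb])
  have hj : Sx bar l j := ⟨h1.symm, fun h => h2 (by rw [h, hb])⟩
  refine h.sim ?_
  intro f hf
  by_cases hfi : f = i
  · subst hfi
    rw [s.new, s.same _ hbi]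
    refine Cn.symm' hb (Sx_symm hb l) (x := ?_) ?_
    have e1 : Cn bar L (Sx bar l) (L f) (L (bar f)) := Cn.edge hf
    rw [s.old] at e1
    exact (Cn.symm' hb (Sx_symm hb l) e1).trans ((Cn.edge hj).scale c)
  · by_cases hfi' : f = bar i
    · subst hfi'
      have e1 : Cn bar L (Sx bar l) (L (bar i)) (L (bar (bar i))) := Cn.edge hf
      rw [s.same _ hbi, hb, s.new]
      rw [hb, s.old] at e1
      exact e1.trans ((Cn.edge hj).scale c)
    · rw [s.same f hfi, s.same (bar f) (fun h => hfi' (by rw [← h, hb]))]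
      exact Cn.edge hf

theorem Sld.i_conn (hb : ∀ e, bar (bar e) = e) (s : Sld bar L L' i j c) :
    Cn bar L (Sx bar i) (L i) (L' i) := by
  rw [s.old, s.new]
  exact (Cn.edge ⟨s.ne1, s.ne2⟩).scale c


def Sij (bar : E → E) (i j f : E) : Prop := Sx bar i f ∧ Sx bar j f

def Tri (bar : E → E) (L : E → ℕ) (i j : E) (c : ℕ) : Prop :=
  ∃ m, m ≠ 1 ∧ (Cn bar L (Sij bar i j) (L j) (m * L j) ∨
    Cn bar L (Sij bar i j) (L (bar j)) (m * L (bar j)) ∨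
    (c = 1 ∧ Cn bar L (Sij bar i j) (L (bar i)) (m * L (bar i))))

theorem Cn.mono (h : ∀ f, S f → T f) {x y : ℕ} (hxy : Cn bar L S x y) : Cn bar L T x y :=
  Cn.sim (bar := bar) (L := L) (fun f hf => Cn.edge (h f hf)) hxy

theorem Sld.tri (hb : ∀ e, bar (bar e) = e) (hn : ∀ e, bar e ≠ e)
    (s : Sld bar L L' i j c) (hN : NoSMC bar L) {x y k : ℕ}
    (hx : x = L j ∨ x = L (bar j)) (hy : y = L j ∨ y = L (bar j)) (hk : k ≠ 1)
    (h : Cn bar L' (Sx bar j) x (k * y)) : Tri bar L i j c := by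
  by_contra hT
  have hT' : ∀ m, (Cn bar L (Sij bar i j) (L j) (m * L j) ∨
    Cn bar L (Sij bar i j) (L (bar j)) (m * L (bar j)) ∨
    (c = 1 ∧ Cn bar L (Sij bar i j) (L (bar i)) (m * L (bar i)))) → m = 1 := by
    intro m hm
    by_contra h1
    exact hT ⟨m, h1, hm⟩
  have hj : Sx bar i j := ⟨s.ne1, s.ne2⟩
  apply hk
  refine heart (Cn bar L (Sij bar i j)) (Cn bar L (Sx bar i)) (Cn bar L (Sx bar j))
    (L j) (L (bar j)) c (L (bar i)) (fun x y k h => h.scale k)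
    (fun x => .refl) (fun x y z h h' => h.trans h')
    (fun x y h => h.mono fun f hf => hf.1) (fun x y h => h.mono fun f hf => hf.2)
    (fun k => (Cn.edge hj).scale k)
    (fun k => (Cn.symm' hb (Sx_symm hb i) (Cn.edge hj)).scale k)
    (fun x y z h h' => h.trans h')
    ?_ (fun k h => hN j k h) ?_ ?_ (fun m h => hT' m (.inl h)) (fun m h => hT' m (.inr (.inl h)))
    (fun hc m h => hT' m (.inr (.inr ⟨hc, h⟩))) (Stp bar L' (Sx bar j)) ?_ x y k hx hy h
  · intro k h
    refine hN (bar j) k ?_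
    rwa [hb, Sx_bar hb]
  · intro k h
    refine hN (bar i) k ?_
    rwa [hb, Sx_bar hb, s.old]
  · intro k h
    refine hN i k ?_
    rwa [s.old]
  · rintro x y ⟨f, hf, m, rfl, rfl⟩
    by_cases hfi : f = i
    · subst hfi
      exact .inr (.inl ⟨m, by rw [s.new], by rw [s.same _ (hn f)]⟩)
    · by_cases hfi' : f = bar i
      · subst hfi'
        exact .inr (.inr ⟨m, by rw [s.same _ hfi], by rw [hb, s.new]⟩)
      · left
        rw [s.same f hfi, s.same (bar f) (fun h => hfi' (by rw [← h, hb]))]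
        exact (Cn.edge (S := Sij bar i j) ⟨⟨hfi, hfi'⟩, hf⟩).scale m

theorem Sld.mb (hb : ∀ e, bar (bar e) = e)
    (s : Sld bar L L' i j c) (h : Tri bar L i j c) : Mb bar L i ∧ Mb bar L j := by
  obtain ⟨m, hm, h⟩ := h
  have hj : Sx bar i j := ⟨s.ne1, s.ne2⟩
  have hi : Sx bar j i := ⟨s.ne1.symm, fun h => s.ne2 (by rw [h, hb])⟩
  have toi : ∀ {x y : ℕ}, Cn bar L (Sij bar i j) x y → Cn bar L (Sx bar i) x y :=
    fun h => h.mono fun f hf => hf.1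
  have toj : ∀ {x y : ℕ}, Cn bar L (Sij bar i j) x y → Cn bar L (Sx bar j) x y :=
    fun h => h.mono fun f hf => hf.2
  rcases h with h | h | ⟨hc, h⟩
  · refine ⟨⟨m, hm, .inl ?_⟩, ⟨m, hm, .inl (toj h)⟩⟩
    rw [s.old]
    simpa [mul_left_comm] using (toi h).scale c
  · refine ⟨⟨m, hm, .inl ?_⟩, ⟨m, hm, .inr (toj h)⟩⟩
    rw [s.old]
    have e1 : Cn bar L (Sx bar i) (L j) (L (bar j)) := Cn.edge hj
    have e2 : Cn bar L (Sx bar i) (L j) (m * L j) := (e1.trans (toi h)).trans ((Cn.symm' hb (Sx_symm hb i) e1).scale m)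
    simpa [mul_left_comm] using e2.scale c
  · refine ⟨⟨m, hm, .inr (toi h)⟩, ⟨m, hm, .inl ?_⟩⟩
    have e1 : Cn bar L (Sx bar j) (L i) (L (bar i)) := Cn.edge hi
    have e2 : Cn bar L (Sx bar j) (L i) (m * L i) := (e1.trans (toj h)).trans ((Cn.symm' hb (Sx_symm hb j) e1).scale m)
    rw [s.old, hc] at e2
    simpa using e2

theorem no_tri_of_card [Finite E] (hb : ∀ e, bar (bar e) = e) (hn : ∀ e, bar e ≠ e)
    (hL : ∀ e, 0 < L e) (hN : NoSMC bar L) (hcard : Nat.card E ≤ 6)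
    (h1 : j ≠ i) (h2 : j ≠ bar i) {x k : ℕ} (hx : 0 < x)
    (h : Cn bar L (Sij bar i j) x (k * x)) : k = 1 := by
  classical
  by_cases hex : ∃ l, Sij bar i j l
  · obtain ⟨l, hl⟩ := hex
    have hall : ∀ f, Sij bar i j f → f = l ∨ f = bar l := by
      intro f hf
      by_contra hcon
      push Not at hcon
      have := Fintype.ofFinite E
      have hinj : ∀ a b, bar a = bar b → a = b := fun a b h => by rw [← hb a, h, hb]
      have hlb : Sij bar i j (bar l) := ⟨Sx_symm hb i l hl.1, Sx_symm hb j l hl.2⟩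
      have : ({i, bar i, j, bar j, l, bar l, f} : Finset E).card = 7 := by
        have a1 := hn i
        have a2 := hn j
        have a3 := hn l
        have a4 : bar j ≠ i := fun h => h2 (by rw [← h, hb])
        have a5 : bar j ≠ bar i := fun h => h1 (hinj _ _ h)
        obtain ⟨⟨b1, b2⟩, b3, b4⟩ := hl
        obtain ⟨⟨c1, c2⟩, c3, c4⟩ := hlb
        obtain ⟨⟨d1, d2⟩, d3, d4⟩ := hf
        obtain ⟨f1, f2⟩ := hcon
        repeat rw [Finset.card_insert_of_notMem]
        · rfl
        all_goals
          simp only [Finset.mem_insert, Finset.mem_singleton, not_or]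
        all_goals
          first
          | exact f2.symm
          | exact ⟨a3.symm, f1.symm⟩
          | exact ⟨b4.symm, c4.symm, d4.symm⟩
          | exact ⟨a2.symm, b3.symm, c3.symm, d3.symm⟩
          | exact ⟨h2.symm, a5.symm, b2.symm, c2.symm, d2.symm⟩
          | exact ⟨a1.symm, h1.symm, a4.symm, b1.symm, c1.symm, d1.symm⟩
      have h7 := Finset.card_le_univ ({i, bar i, j, bar j, l, bar l, f} : Finset E)
      rw [this, ← Nat.card_eq_fintype_card] at h7
      omega
    refine single_gen (L l) (L (bar l)) (hL _) (hL _) ?_ ?_ _ ?_ x k hx h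
    · intro k hk
      exact hN l k (by rw [← hk]; exact .refl)
    · intro k hk
      refine hN (bar l) k ?_
      rw [← hk, hb]
      exact .refl
    · rintro x y ⟨f, hf, m, rfl, rfl⟩
      rcases hall f hf with rfl | rfl
      · exact .inl ⟨m, rfl, rfl⟩
      · exact .inr ⟨m, rfl, by rw [hb]⟩
  · have : ∀ z, Cn bar L (Sij bar i j) x z → z = x := by
      intro z hz
      induction hz with
      | refl => rfl
      | tail _ h2 _ =>
        obtain ⟨f, hf, _⟩ := h2
        exact absurd ⟨f, hf⟩ hex
    have := this _ h
    exact Nat.eq_of_mul_eq_mul_right hx (by omega)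

/-- Slides preserve the absence of strict monotone cycles, and do not create mobile edges. -/
theorem Sld.main [Finite E] (hb : ∀ e, bar (bar e) = e) (hn : ∀ e, bar e ≠ e)
    (hL : ∀ e, 0 < L e) (s : Sld bar L L' i j c) (hN : NoSMC bar L)
    (hc : (∀ x y, Mb bar L x → Mb bar L y → y = x ∨ y = bar x) ∨ Nat.card E ≤ 6) :
    NoSMC bar L' ∧ ∀ x, Mb bar L' x → Mb bar L x := by
  have hbj : bar j ≠ i := fun h => s.ne2 (by rw [← h, hb])
  have Lj : L' j = L j := s.same _ s.ne1
  have Lbj : L' (bar j) = L (bar j) := s.same _ hbj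
  have Lbi : L' (bar i) = L (bar i) := s.same _ (hn i)
  have hnT : ¬ Tri bar L i j c := by
    intro hT
    rcases hc with hc | hc
    · obtain ⟨hi, hj⟩ := s.mb hb hT
      rcases hc i j hi hj with h | h
      · exact s.ne1 h
      · exact s.ne2 h
    · obtain ⟨m, hm, h⟩ := hT
      rcases h with h | h | ⟨_, h⟩ <;>
        exact hm (no_tri_of_card hb hn hL hN hc s.ne1 s.ne2 (hL _) h)
  have hi : ∀ {x y : ℕ}, Cn bar L' (Sx bar i) x y → Cn bar L (Sx bar i) x y := fun h =>
    s.cn_other hb hn i s.ne1.symm (fun h => s.ne2 (by rw [h, hb])) h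
  have ic := s.i_conn hb
  have ic' := Cn.symm' hb (Sx_symm hb i) ic
  constructor
  · intro e k h
    by_cases he : e = j ∨ e = bar j
    · by_contra hk
      rcases he with rfl | rfl
      · rw [Lj, Lbj] at h
        exact hnT (s.tri hb hn hN (.inr rfl) (.inl rfl) hk h)
      · rw [hb, Lj, Lbj, Sx_bar hb] at h
        exact hnT (s.tri hb hn hN (.inl rfl) (.inr rfl) hk h)
    · push Not at he
      have h := s.cn_other hb hn e he.1 he.2 h
      by_cases h1 : e = i
      · subst h1
        rw [Lbi] at h
        exact hN e k (h.trans (ic'.scale k))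
      · by_cases h2 : e = bar i
        · subst h2
          rw [hb, Lbi, Sx_bar hb] at h
          refine hN (bar i) k ?_
          rw [hb, Sx_bar hb]
          exact ic.trans h
        · rw [s.same e h1, s.same (bar e) (fun h => h2 (by rw [← h, hb]))] at h
          exact hN e k h
  · have mi : Mb bar L' i → Mb bar L i := by
      rintro ⟨k, hk, h | h⟩
      · exact ⟨k, hk, .inl ((ic.trans (hi h)).trans (ic'.scale k))⟩
      · rw [Lbi] at h
        exact ⟨k, hk, .inr (hi h)⟩
    have mj : Mb bar L' j → Mb bar L j := by
      rintro ⟨k, hk, h | h⟩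
      · rw [Lj] at h
        exact absurd (s.tri hb hn hN (.inl rfl) (.inl rfl) hk h) hnT
      · rw [Lbj] at h
        exact absurd (s.tri hb hn hN (.inr rfl) (.inr rfl) hk h) hnT
    intro e he
    by_cases h1 : e = i
    · subst h1; exact mi he
    by_cases h2 : e = bar i
    · subst h2; exact (Mb_bar hb i).2 (mi ((Mb_bar hb i).1 he))
    by_cases h3 : e = j
    · subst h3; exact mj he
    by_cases h4 : e = bar j
    · subst h4; exact (Mb_bar hb j).2 (mj ((Mb_bar hb j).1 he))
    obtain ⟨k, hk, h⟩ := he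
    rw [s.same e h1, s.same (bar e) (fun h => h2 (by rw [← h, hb]))] at h
    exact ⟨k, hk, h.imp (s.cn_other hb hn e h3 h4) (s.cn_other hb hn e h3 h4)⟩

end Core

section GraphLevel

namespace LGraph

/-- Labels as natural numbers. -/
def L {V E : Type} (G : LGraph V E) (e : E) : ℕ := (G.lab e).toNat

variable {V E V' E' : Type}

theorem L_cast (G : LGraph V E) (hp : G.Positive) (e : E) : ((G.L e : ℕ) : ℤ) = G.lab e :=
  Int.toNat_of_nonneg (hp e).le

theorem L_castQ (G : LGraph V E) (hp : G.Positive) (e : E) :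
    ((G.L e : ℕ) : ℚ) = (G.lab e : ℚ) := by
  rw [← G.L_cast hp e]; simp

theorem L_pos (G : LGraph V E) (hp : G.Positive) (e : E) : 0 < G.L e := by
  have h1 := G.L_cast hp e
  have h2 := hp e
  omega

theorem q_append_single (G : LGraph V E) (l : List E) (f : E) :
    G.q (l ++ [f]) = G.q l * G.qe f := by
  simp [q]

theorem div_append (G : LGraph V E) (e : E) (l : List E) (f : E) :
    (∀ i : Fin (l ++ [f]).length, ∃ k : ℤ,
      (G.lab e : ℚ) * G.q ((l ++ [f]).take i.1) = (k : ℚ) * (G.lab ((l ++ [f]).get i) : ℚ)) ↔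
    (∀ i : Fin l.length, ∃ k : ℤ,
      (G.lab e : ℚ) * G.q (l.take i.1) = (k : ℚ) * (G.lab (l.get i) : ℚ)) ∧
    ∃ k : ℤ, (G.lab e : ℚ) * G.q l = (k : ℚ) * (G.lab f : ℚ) := by
  constructor
  · intro h
    constructor
    · rintro ⟨i, hi⟩
      obtain ⟨k, hk⟩ := h ⟨i, by simp; omega⟩
      refine ⟨k, ?_⟩
      simpa [List.take_append_of_le_length hi.le, List.getElem_append_left hi] using hk
    · obtain ⟨k, hk⟩ := h ⟨l.length, by simp⟩
      exact ⟨k, by simpa using hk⟩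
  · rintro ⟨h1, k, hk⟩ ⟨i, hi⟩
    by_cases hil : i < l.length
    · obtain ⟨k, hk⟩ := h1 ⟨i, hil⟩
      refine ⟨k, ?_⟩
      simpa [List.take_append_of_le_length hil.le, List.getElem_append_left hil] using hk
    · have : i = l.length := by simp at hi; omega
      subst this
      exact ⟨k, by simpa using hk⟩

theorem path_to_cn (G : LGraph V E) (hp : G.Positive) (e : E) (l : List E)
    (h1 : ∀ a ∈ l, a ≠ e ∧ a ≠ G.bar e)
    (h2 : ∀ i : Fin l.length, ∃ k : ℤ,
      (G.lab e : ℚ) * G.q (l.take i.1) = (k : ℚ) * (G.lab (l.get i) : ℚ)) :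
    ∃ y : ℕ, (y : ℚ) = (G.lab e : ℚ) * G.q l ∧ Cn G.bar G.L (Sx G.bar e) (G.L e) y := by
  induction l using List.reverseRecOn with
  | nil => exact ⟨G.L e, by simp [q, G.L_castQ hp], .refl⟩
  | append_singleton l f ih =>
    rw [div_append] at h2
    obtain ⟨y, hy, hc⟩ := ih (fun a ha => h1 a (by simp [ha])) h2.1
    obtain ⟨k, hk⟩ := h2.2
    rw [← hy] at hk
    have hf := hp f
    have hyk : (y : ℤ) = k * G.lab f := by exact_mod_cast hk
    have hk0 : 0 ≤ k := by
      by_contra hneg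
      push Not at hneg
      have := mul_neg_of_neg_of_pos hneg hf
      omega
    lift k to ℕ using hk0
    have hy' : y = k * G.L f := by
      rw [← G.L_cast hp] at hyk
      exact_mod_cast hyk
    refine ⟨k * G.L (G.bar f), ?_, hc.tail ⟨f, h1 f (by simp), k, hy', rfl⟩⟩
    rw [q_append_single, ← mul_assoc, ← hy, hy', qe]
    push_cast
    rw [G.L_castQ hp, G.L_castQ hp]
    have : (G.lab f : ℚ) ≠ 0 := by exact_mod_cast hf.ne'
    field_simp

theorem cn_to_path [Subsingleton V] (G : LGraph V E) (hp : G.Positive) (e : E) (y : ℕ)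
    (h : Cn G.bar G.L (Sx G.bar e) (G.L e) y) :
    ∃ l, G.IsEEdgePath e l ∧ (y : ℚ) = (G.lab e : ℚ) * G.q l := by
  suffices hs : ∃ l : List E, (∀ a ∈ l, a ≠ e ∧ a ≠ G.bar e) ∧ (∀ i : Fin l.length, ∃ k : ℤ,
      (G.lab e : ℚ) * G.q (l.take i.1) = (k : ℚ) * (G.lab (l.get i) : ℚ)) ∧
      (y : ℚ) = (G.lab e : ℚ) * G.q l by
    obtain ⟨l, h1, h2, h3⟩ := hs
    refine ⟨l, ⟨?_, h1, fun a _ => Subsingleton.elim _ _, h2⟩, h3⟩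
    exact (List.pairwise_of_forall fun _ _ => Subsingleton.elim _ _).isChain
  induction h with
  | refl => exact ⟨[], by simp, fun i => i.elim0, by simp [q, G.L_castQ hp]⟩
  | tail _ h2 ih =>
    obtain ⟨f, hf, c, rfl, rfl⟩ := h2
    obtain ⟨l, h1, h2, h3⟩ := ih
    push_cast at h3
    rw [G.L_castQ hp] at h3
    refine ⟨l ++ [f], ?_, ?_, ?_⟩
    · intro a ha
      rcases List.mem_append.1 ha with ha | ha
      · exact h1 a ha
      · rw [List.mem_singleton.1 ha]; exact hf
    · rw [div_append]
      exact ⟨h2, c, by rw [← h3]; simp⟩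
    · rw [q_append_single, ← mul_assoc, ← h3, qe]
      push_cast
      rw [G.L_castQ hp]
      have : (G.lab f : ℚ) ≠ 0 := by exact_mod_cast (hp f).ne'
      field_simp

theorem smc_to_cn (G : LGraph V E) (hp : G.Positive) (l : List E) (e : E)
    (h : G.IsStrictMonotoneCycle l e) :
    ∃ k, k ≠ 1 ∧ Cn G.bar G.L (Sx G.bar e) (G.L (G.bar e)) (k * G.L e) := by
  obtain ⟨⟨hpath, _, k, hk⟩, hne⟩ := h
  obtain ⟨y, hy, hc⟩ := G.path_to_cn hp _ l hpath.2.1 hpath.2.2.2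
  rw [Sx_bar G.bar_bar] at hc
  have hf : (G.lab e : ℚ) ≠ 0 := by exact_mod_cast (hp e).ne'
  have hq : (y : ℚ) = G.q (l ++ [e]) * (G.lab e : ℚ) := by
    rw [q_append_single, hy, qe]
    field_simp
  rw [hk] at hq hne
  have hyk : (y : ℤ) = k * G.lab e := by exact_mod_cast hq
  have hk0 : 0 ≤ k := by
    by_contra hneg
    push Not at hneg
    have := mul_neg_of_neg_of_pos hneg (hp e)
    omega
  lift k to ℕ using hk0
  rw [← G.L_cast hp] at hyk
  have hy' : y = k * G.L e := by exact_mod_cast hyk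
  refine ⟨k, fun h => hne (by simp [h]), ?_⟩
  rw [← hy']
  exact hc

theorem cn_to_smc [Subsingleton V] (G : LGraph V E) (hp : G.Positive) (e : E) (k : ℕ)
    (hk : k ≠ 1) (h : Cn G.bar G.L (Sx G.bar e) (G.L (G.bar e)) (k * G.L e)) :
    ∃ l, G.IsStrictMonotoneCycle l e := by
  obtain ⟨l, hl, hq⟩ := G.cn_to_path hp (G.bar e) (k * G.L e) (by rwa [Sx_bar G.bar_bar])
  have hf : (G.lab e : ℚ) ≠ 0 := by exact_mod_cast (hp e).ne'
  have hqk : G.q (l ++ [e]) = (k : ℚ) := by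
    push_cast at hq
    rw [G.L_castQ hp] at hq
    rw [q_append_single, qe, ← mul_div_assoc, mul_comm, ← hq]
    field_simp
  refine ⟨l, ⟨hl, Subsingleton.elim _ _, k, by rw [hqk]; simp⟩, ?_⟩
  rw [hqk]
  exact_mod_cast hk

theorem noSMC_iff [Subsingleton V] (G : LGraph V E) (hp : G.Positive) :
    NoSMC G.bar G.L ↔ ¬ G.HasStrictMonotoneCycle := by
  constructor
  · rintro h ⟨l, e, hle⟩
    obtain ⟨k, hk, hc⟩ := G.smc_to_cn hp l e hle
    exact hk (h e k hc)
  · intro h e k hc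
    by_contra hk
    obtain ⟨l, hl⟩ := G.cn_to_smc hp e k hk hc
    exact h ⟨l, e, hl⟩

theorem cn_to_int [Subsingleton V] (G : LGraph V E) (hp : G.Positive) (e : E) (k : ℕ)
    (hk : k ≠ 1) (h : Cn G.bar G.L (Sx G.bar e) (G.L e) (k * G.L e)) :
    ∃ l, G.IsStrictIntegerCycle e l := by
  obtain ⟨l, hl, hq⟩ := G.cn_to_path hp e (k * G.L e) h
  have hf : (G.lab e : ℚ) ≠ 0 := by exact_mod_cast (hp e).ne'
  have hqk : G.q l = (k : ℚ) := by
    push_cast at hq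
    rw [G.L_castQ hp, mul_comm] at hq
    exact (mul_left_cancel₀ hf hq).symm
  have hne : G.q l ≠ 1 := by
    rw [hqk]
    exact_mod_cast hk
  refine ⟨l, hl, ?_, Subsingleton.elim _ _, ⟨k, by rw [hqk]; simp⟩, hne⟩
  rintro rfl
  exact hne (by simp [q])

theorem mb_mobile [Subsingleton V] (G : LGraph V E) (hp : G.Positive) (e : E)
    (h : Mb G.bar G.L e) : G.Mobile e := by
  obtain ⟨k, hk, h | h⟩ := h
  · obtain ⟨l, hl⟩ := G.cn_to_int hp e k hk h
    exact .inr ⟨l, .inl hl⟩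
  · obtain ⟨l, hl⟩ := G.cn_to_int hp (G.bar e) k hk (by rwa [Sx_bar G.bar_bar])
    exact .inr ⟨l, .inr hl⟩

/-- The invariant carried along sequences of moves. -/
structure Inv (G : LGraph V E) : Prop where
  sub : Subsingleton V
  fin : Finite E
  pos : G.Positive
  no : NoSMC G.bar G.L
  cond : (∀ x y, Mb G.bar G.L x → Mb G.bar G.L y → y = x ∨ y = G.bar x) ∨ Nat.card E ≤ 6

theorem Isom.symm {G : LGraph V E} {G' : LGraph V' E'} (h : Isom G G') : Isom G' G := by
  obtain ⟨φ, Φ, hφ, hΦ, h1, h2, h3⟩ := h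
  let a := Equiv.ofBijective φ hφ
  let b := Equiv.ofBijective Φ hΦ
  have hb : ∀ x, Φ (b.symm x) = x := fun x => b.apply_symm_apply x
  refine ⟨a.symm, b.symm, a.symm.bijective, b.symm.bijective, ?_, ?_, ?_⟩
  · intro x
    apply hφ.1
    rw [← h1, hb]
    exact (a.apply_symm_apply _).symm
  · intro x
    apply hΦ.1
    rw [← h2, hb, hb]
  · intro x
    rw [← h3, hb]

theorem Isom.inv {G : LGraph V E} {G' : LGraph V' E'} (h : Isom G G') (hG' : G'.Inv) :
    G.Inv := by
  obtain ⟨φ, Φ, hφ, hΦ, h1, h2, h3⟩ := h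
  have hL : ∀ x, G'.L (Φ x) = G.L x := fun x => by simp [L, h3]
  have hst : ∀ S, Stp G.bar G.L (fun f => S (Φ f)) = Stp G'.bar G'.L S := by
    intro S
    funext x y
    apply propext
    constructor
    · rintro ⟨f, hf, c, rfl, rfl⟩
      exact ⟨Φ f, hf, c, by rw [hL], by rw [h2, hL]⟩
    · rintro ⟨f, hf, c, rfl, rfl⟩
      obtain ⟨f, rfl⟩ := hΦ.2 f
      exact ⟨f, hf, c, by rw [hL], by rw [h2, hL]⟩
  have hcn : ∀ e, Cn G.bar G.L (Sx G.bar e) = Cn G'.bar G'.L (Sx G'.bar (Φ e)) := by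
    intro e
    unfold Cn
    rw [← hst]
    congr 2
    funext f
    simp only [Sx, h2, ne_eq, hΦ.1.eq_iff]
  have hmb : ∀ e, Mb G.bar G.L e ↔ Mb G'.bar G'.L (Φ e) := by
    intro e
    simp only [Mb, hcn, h2, hL]
  have := hG'.sub
  have := hG'.fin
  refine ⟨hφ.1.subsingleton, Finite.of_injective Φ hΦ.1, ?_, ?_, ?_⟩
  · intro e
    rw [← h3]; exact hG'.pos _
  · intro e k hk
    rw [hcn] at hk
    refine hG'.no (Φ e) k ?_
    rwa [h2, hL, hL]
  · rcases hG'.cond with h | h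
    · left
      intro x y hx hy
      rcases h _ _ ((hmb x).1 hx) ((hmb y).1 hy) with h | h
      · exact .inl (hΦ.1 h)
      · rw [h2] at h
        exact .inr (hΦ.1 h)
    · right
      rwa [Nat.card_congr (Equiv.ofBijective Φ hΦ)]

theorem slide_lab (G : LGraph V E) {e f : E} (hp : G.Positive) (h : G.CanSlide e f) :
    ∃ c : ℕ, 0 < c ∧ G.L e = c * G.L f ∧ (G.slide e f).lab e = c * G.lab (G.bar f) := by
  obtain ⟨c, hc⟩ := h.2.2.2
  have he := hp e
  have hf := hp f
  have hc0 : 0 < c := by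
    rw [hc] at he
    exact pos_of_mul_pos_right he hf.le
  lift c to ℕ using hc0.le
  refine ⟨c, by exact_mod_cast hc0, ?_, ?_⟩
  · rw [← G.L_cast hp, ← G.L_cast hp] at hc
    rw [mul_comm]
    exact_mod_cast hc
  · simp only [slide, if_true]
    rw [hc, mul_assoc, Int.mul_ediv_cancel_left _ hf.ne']

theorem slide_pos (G : LGraph V E) {e f : E} (hp : G.Positive) (h : G.CanSlide e f) :
    (G.slide e f).Positive := by
  intro x
  by_cases hx : x = e
  · subst hx
    obtain ⟨c, hc, _, h2⟩ := G.slide_lab hp h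
    rw [h2]
    have := hp (G.bar f)
    positivity
  · simp only [slide, if_neg hx]
    exact hp x

theorem slide_sld (G : LGraph V E) {e f : E} (hp : G.Positive) (h : G.CanSlide e f) :
    ∃ c : ℕ, Sld G.bar G.L (G.slide e f).L e f c := by
  obtain ⟨c, hc, h1, h2⟩ := G.slide_lab hp h
  refine ⟨c, h.1, h.2.1, h1, ?_, ?_⟩
  · rw [L, h2, ← G.L_cast hp]
    exact_mod_cast Int.toNat_natCast _
  · intro x hx
    simp only [L, slide, if_neg hx]

theorem Inv.slide {G : LGraph V E} (hG : G.Inv) {e f : E} (h : G.CanSlide e f) :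
    (G.slide e f).Inv := by
  have := hG.fin
  obtain ⟨c, hs⟩ := G.slide_sld hG.pos h
  obtain ⟨h1, h2⟩ := hs.main G.bar_bar G.bar_ne (G.L_pos hG.pos) hG.no hG.cond
  refine ⟨hG.sub, hG.fin, G.slide_pos hG.pos h, h1, ?_⟩
  exact hG.cond.imp (fun h x y hx hy => h x y (h2 x hx) (h2 y hy)) id

theorem Inv.lab_eq {G : LGraph V E} (hG : G.Inv) (e : E) (k : ℤ)
    (h : G.lab (G.bar e) = k * G.lab e) : k = 1 := by
  have h1 := hG.pos e
  have h2 := hG.pos (G.bar e)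
  have hk : 0 < k := by
    rw [h] at h2
    exact pos_of_mul_pos_left h2 h1.le
  lift k to ℕ using hk.le
  have : G.L (G.bar e) = k * G.L e := by
    rw [← G.L_cast hG.pos, ← G.L_cast hG.pos] at h
    exact_mod_cast h
  exact_mod_cast hG.no e k (by rw [this]; exact .refl)

theorem inductionMove_one (G : LGraph V E) (e : E) : G.inductionMove e 1 = G := by
  cases G
  simp [inductionMove]

theorem Inv.noAsc {G : LGraph V E} (hG : G.Inv) : ¬ G.HasStrictAscendingLoop := by
  rintro ⟨e, _, h1, h2⟩
  exact h2 (hG.lab_eq e _ (by rw [h1, mul_one]))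

theorem Inv.elem {X Y : BGraph} (hX : X.G.Inv) (h : X.ElemMove Y) : Y.G.Inv := by
  have := hX.sub
  rcases h with ⟨e, f, h, hi⟩ | ⟨e, m, _, h1, hm, hd, hi⟩ | ⟨e, m, _, h1, hm, hd, hi⟩ | h | h
  · exact hi.inv (hX.slide h)
  · have h2 := hX.lab_eq e _ (by rw [h1, mul_one])
    have : m = 1 := by
      rw [h2] at hd
      exact Int.eq_one_of_dvd_one (by omega) hd
    subst this
    rw [inductionMove_one] at hi
    exact hi.inv hX
  · have hI := hi.symm.inv hX
    have h2 := hI.lab_eq e (Y.G.lab (Y.G.bar e)) (by simp [inductionMove, h1])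
    have : m = 1 := by
      rw [h2] at hd
      exact Int.eq_one_of_dvd_one (by omega) hd
    subst this
    rw [inductionMove_one] at hI
    exact hI
  · obtain ⟨e, d, _, _, _, _, _, _, _, h, _⟩ := h
    exact absurd (Subsingleton.elim _ _) h
  · obtain ⟨e, d, e', φ, Φ, _, _, h3, _, _, _, _, _, _, _, _, h4, h5, _⟩ := h
    exact absurd (hX.lab_eq e' _ (by rw [h5, h4, mul_comm])) h3

theorem reach [Subsingleton V] (G : LGraph V E) (hp : G.Positive) (e : E) (y : ℕ)
    (h : Cn G.bar G.L (Sx G.bar e) (G.L e) y) :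
    ∃ G2 : LGraph V E, BGraph.MoveSeq ⟨V, E, G⟩ ⟨V, E, G2⟩ ∧ G2.bar = G.bar ∧ G2.Positive ∧
      G2.L e = y ∧ ∀ x, x ≠ e → G2.L x = G.L x := by
  induction h with
  | refl => exact ⟨G, .refl, rfl, hp, rfl, fun _ _ => rfl⟩
  | tail _ h2 ih =>
    obtain ⟨f, hf, c, rfl, rfl⟩ := h2
    obtain ⟨G2, hm, hb, hp2, hy, hL⟩ := ih
    have hfe : G2.L f = G.L f := hL f hf.1
    have hbf : G.bar f ≠ e := fun h => hf.2 (by rw [← h, G.bar_bar])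
    have hcan : G2.CanSlide e f := by
      refine ⟨hf.1, by rw [hb]; exact hf.2, Subsingleton.elim _ _, ?_⟩
      rw [← G2.L_cast hp2, ← G2.L_cast hp2, hy, hfe]
      exact ⟨c, by push_cast; ring⟩
    obtain ⟨c', hs⟩ := G2.slide_sld hp2 hcan
    refine ⟨G2.slide e f, hm.tail ⟨.inl ⟨e, f, hcan, ?_⟩, ?_⟩, hb, G2.slide_pos hp2 hcan, ?_, ?_⟩
    · exact ⟨id, id, Function.bijective_id, Function.bijective_id, fun _ => rfl, fun _ => rfl,
        fun _ => rfl⟩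
    · intro x _
      exact Subsingleton.elim (α := V) _ _
    · have hcc : c' = c := by
        have h1 := hs.old
        rw [hy, hfe] at h1
        exact (Nat.eq_of_mul_eq_mul_right (G.L_pos hp f) h1).symm
      rw [hs.new, hcc, hb, hL _ hbf]
    · intro x hx
      rw [hs.same x hx, hL x hx]

open Classical in
/-- The expansion (inverse A-move) of a loop with labels `a`, `k * a`. -/
noncomputable def expand (G : LGraph V E) (e : E) (k : ℤ) : LGraph (Option V) (E ⊕ Bool) where
  o := Sum.elim (fun x => if x = G.bar e then none else some (G.o x)) (fun _ => none)
  bar := Sum.elim (fun x => .inl (G.bar x)) (fun b => .inr (!b))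
  bar_bar := by rintro (x | x) <;> simp [G.bar_bar]
  bar_ne := by rintro (x | x) <;> simp [G.bar_ne]
  lab := Sum.elim (fun x => if x = G.bar e then k else G.lab x) (fun b => if b then 1 else k)

theorem expand_isAMove [Subsingleton V] (G : LGraph V E) (e : E) (k : ℤ) (hk : k ≠ 1)
    (h1 : G.lab e ≠ 1) (h : G.lab (G.bar e) = G.lab e * k) : IsAMove (G.expand e k) G := by
  have hne : e ≠ G.bar e := (G.bar_ne e).symm
  have hbi : ∀ x, G.bar x = G.bar e → x = e := fun x h => by rw [← G.bar_bar x, h, G.bar_bar]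
  have hbi' : ∀ x, G.bar x = e → x = G.bar e := fun x h => by rw [← h, G.bar_bar]
  refine ⟨.inr true, .inl (G.bar e), e, fun o => o.getD (G.o e), Sum.elim id (fun _ => e),
    ?_, ?_, ?_, ?_, ?_, ?_, ?_, ?_, ?_, Subsingleton.elim _ _, Subsingleton.elim _ _, ?_, ?_,
    ?_, ?_, ?_, ?_, ?_⟩
  · simp [expand, t]
  · simp [expand]
  · simpa [expand] using hk
  · simp [expand]
  · simp [expand, t, G.bar_bar, hne]
  · simpa [expand] using hk
  · simpa [expand, G.bar_bar, hne] using h1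
  · simp [expand]
  · rintro (x | x) hx
    · by_cases hxe : x = G.bar e
      · simp [hxe]
      · simp [expand, hxe] at hx
    · cases x <;> simp [expand]
  · simp [expand, G.bar_bar, hne]
  · simp [expand, G.bar_bar, hne, h]
  · rintro (_ | w1) (_ | w2) h1 h2 _
    · rfl
    · simp [expand] at h1
    · simp [expand] at h2
    · rw [Subsingleton.elim w1 w2]
  · intro v
    exact ⟨some v, by simp [expand], rfl⟩
  · rintro (x | x) a1 a2 a3 a4
    · have b3 : x ≠ G.bar e := fun h => a3 (by rw [h])
      have b4 : x ≠ e := fun h => a4 (by simp [expand, h, G.bar_bar])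
      exact ⟨b4, b3, Subsingleton.elim _ _, by simp [expand], by simp [expand, b3]⟩
    · cases x <;> simp [expand] at a1 a2
  · rintro (x | x) (y | y) a1 a2 _ _ c1 c2 _ _ hxy
    · exact congrArg _ hxy
    · cases y <;> simp [expand] at c1 c2
    · cases x <;> simp [expand] at a1 a2
    · cases x <;> simp [expand] at a1 a2
  · intro y hy1 hy2
    refine ⟨.inl y, by simp, by simp [expand], by simpa using hy2, ?_, rfl⟩
    simpa [expand, G.bar_bar] using hy1

theorem expand_reduced [Subsingleton V] (G : LGraph V E) (e : E) (k : ℤ) (hk : k ≠ 1)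
    (h1 : G.lab e ≠ 1) : (G.expand e k).Reduced := by
  have hbi : ∀ x, G.bar x = G.bar e → x = e := fun x h => by rw [← G.bar_bar x, h, G.bar_bar]
  rintro (x | x) hx
  · by_cases hxe : x = G.bar e
    · simp [expand, hxe, hk] at hx
    · by_cases hxe' : G.bar x = G.bar e
      · rw [hbi x hxe'] at hx hxe
        simp [expand, hxe, h1] at hx
      · simp [expand, t, hxe, hxe']
        exact Subsingleton.elim _ _
  · simp [expand, t]

theorem smc_to_asc [Subsingleton V] (G : LGraph V E) (hp : G.Positive)
    (h : G.HasStrictMonotoneCycle) :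
    ∃ Y : BGraph, BGraph.MoveSeq ⟨V, E, G⟩ Y ∧ Y.G.HasStrictAscendingLoop := by
  obtain ⟨l, e, hle⟩ := h
  obtain ⟨k, hk, hc⟩ := G.smc_to_cn hp l e hle
  obtain ⟨G2, hm, hb, hp2, hy, hL⟩ := G.reach hp (G.bar e) (k * G.L e)
    (by rwa [Sx_bar G.bar_bar])
  rw [← hL e (G.bar_ne e).symm, ← hb] at hy
  have hlab : G2.lab (G2.bar e) = G2.lab e * k := by
    rw [← G2.L_cast hp2, ← G2.L_cast hp2, hy]
    push_cast
    ring
  have hk' : (k : ℤ) ≠ 1 := by exact_mod_cast hk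
  by_cases h1 : G2.lab e = 1
  · refine ⟨⟨V, E, G2⟩, hm, e, Subsingleton.elim (α := V) _ _, h1, ?_⟩
    change G2.lab (G2.bar e) ≠ 1
    rw [hlab, h1, one_mul]
    exact hk'
  · refine ⟨⟨_, _, G2.expand e k⟩, hm.tail ⟨?_, G2.expand_reduced e k hk' h1⟩, .inr true, ?_⟩
    · exact .inr (.inr (.inr (.inr (G2.expand_isAMove e k hk' h1 hlab))))
    · refine ⟨?_, ?_, ?_⟩
      · simp [expand, t]
      · simp [expand]
      · simpa [expand] using hk'

end LGraph

end GraphLevel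

/-- (Corollary 3.10) Let `Γ` be an `n`-rose with positive labels such that
either exactly one pair of edges is mobile, or `n ≤ 3`. Then some reduced labeled graph
obtained from `Γ` by a finite sequence of slide, induction and A-moves (all intermediate
graphs reduced) contains a strict ascending loop if and only if `Γ` contains a strict
monotone cycle. -/
theorem stmt19 {V E : Type} [Finite V] [Finite E] (G : LGraph V E) (n : ℕ)
    (hrose : G.IsRose n) (hpos : G.Positive)
    (hcond : (∃ e : E, G.Mobile e ∧ ∀ x : E, G.Mobile x → x = e ∨ x = G.bar e) ∨ n ≤ 3) :
    (∃ Y : BGraph, BGraph.MoveSeq ⟨V, E, G⟩ Y ∧ Y.G.HasStrictAscendingLoop)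
      ↔ G.HasStrictMonotoneCycle := by
  have hsub : Subsingleton V := (Nat.card_eq_one_iff_unique.1 hrose.1).1
  constructor
  · rintro ⟨Y, hY, hasc⟩
    by_contra hno
    have hInv : G.Inv := by
      refine ⟨hsub, inferInstance, hpos, (G.noSMC_iff hpos).2 hno, ?_⟩
      rcases hcond with ⟨e, _, he⟩ | hn
      · left
        intro x y hx hy
        have hx' := he x (G.mb_mobile hpos x hx)
        have hy' := he y (G.mb_mobile hpos y hy)
        rcases hx' with rfl | rfl <;> rcases hy' with rfl | rfl <;> simp [G.bar_bar]
      · right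
        have := hrose.2
        omega
    have key : ∀ Z : BGraph, BGraph.MoveSeq ⟨V, E, G⟩ Z → Z.G.Inv := by
      intro Z hZ
      induction hZ with
      | refl => exact hInv
      | tail _ h ih => exact LGraph.Inv.elem ih h.1
    exact (key Y hY).noAsc hasc
  · exact G.smc_to_asc hpos
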